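/- Let A₁, A₂, A₃ be hermitian 4×4 complex matrices whose joint numerical range W = W(A₁,A₂,A₃) has dimension 3. Suppose G₁ and G₂ are distinct one-dimensional nonexposed faces of W, H₁ and H₂ are distinct non-elliptic faces of W with G₁ ⊆ H₁ and G₂ ⊆ H₂, and G is a one-dimensional exposed face of W. If G₁ ∩ G₂ ∩ G is nonempty, then G₁ ∩ G₂ ∩ G is a singleton {p} and p is a corner point of W. -/

import Mathlib

open Matrix ComplexOrder

noncomputable section

/-- A density matrix: positive semidefinite with unit trace. -/
def IsDensity {n : Type*} [Fintype n] (ρ : Matrix n n ℂ) : Prop :=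
  ρ.PosSemidef ∧ ρ.trace = 1

/-- The measurement map `ρ ↦ (tr ρA₁, …, tr ρA_k)` (the traces are real for
hermitian matrices). -/
def wpt {n : Type*} [Fintype n] {k : ℕ} (A : Fin k → Matrix n n ℂ)
    (ρ : Matrix n n ℂ) : Fin k → ℝ :=
  fun i => ((ρ * A i).trace).re

/-- The joint numerical range of `k` matrices. -/
def JNR {n : Type*} [Fintype n] {k : ℕ} (A : Fin k → Matrix n n ℂ) :
    Set (Fin k → ℝ) :=
  wpt A '' {ρ | IsDensity ρ}

/-- `F` is a face of the convex set `C`: a convex subset such that whenever an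
open segment between two points of `C` meets `F`, both endpoints lie in `F`. -/
def IsFaceOf {E : Type*} [AddCommGroup E] [Module ℝ E] (C F : Set E) : Prop :=
  Convex ℝ F ∧ IsExtreme ℝ C F

/-- The dimension of a convex set: the dimension of its affine hull. -/
def convDim {E : Type*} [AddCommGroup E] [Module ℝ E] (F : Set E) : ℕ :=
  Module.finrank ℝ (affineSpan ℝ F).direction

/-- Euclidean dot product on `Fin d → ℝ`. -/
def dotR {d : ℕ} (u v : Fin d → ℝ) : ℝ := ∑ i, u i * v i

/-- `F` is an exposed face of `C`: the set of minimizers of a linear functional. -/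
def IsExposedFace {d : ℕ} (C F : Set (Fin d → ℝ)) : Prop :=
  ∃ u : Fin d → ℝ, F = {x ∈ C | ∀ y ∈ C, dotR u x ≤ dotR u y}

/-- The normal cone of `C` at `p`. -/
def normalConeAt {d : ℕ} (C : Set (Fin d → ℝ)) (p : Fin d → ℝ) :
    Set (Fin d → ℝ) :=
  {u | ∀ y ∈ C, 0 ≤ dotR (y - p) u}

/-- `p` is a corner point of `C` if the normal cone of `C` at `p` spans `ℝ^d`. -/
def IsCornerPoint {d : ℕ} (C : Set (Fin d → ℝ)) (p : Fin d → ℝ) : Prop :=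
  p ∈ C ∧ Submodule.span ℝ (normalConeAt C p) = ⊤

/-- The closed unit disk of `ℝ²`. -/
def unitDisk2 : Set (Fin 2 → ℝ) := {v | v 0 ^ 2 + v 1 ^ 2 ≤ 1}

/-- An elliptic disk in `ℝ³`: the image of the closed unit disk of `ℝ²` under an
injective affine map. -/
def IsEllipticDisk (F : Set (Fin 3 → ℝ)) : Prop :=
  ∃ f : (Fin 2 → ℝ) →ᵃ[ℝ] (Fin 3 → ℝ), Function.Injective f ∧ F = f '' unitDisk2

/-- A non-elliptic face of `W`: a two-dimensional face that is not an elliptic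
disk. -/
def IsNonEllipticFace (W F : Set (Fin 3 → ℝ)) : Prop :=
  IsFaceOf W F ∧ convDim F = 2 ∧ ¬ IsEllipticDisk F

/-- A rank-3 face of the joint numerical range of `A`. -/
def IsRank3Face {k : ℕ} (A : Fin k → Matrix (Fin 4) (Fin 4) ℂ)
    (F : Set (Fin k → ℝ)) : Prop :=
  F.Nonempty ∧ IsFaceOf (JNR A) F ∧
    ∃ P : Matrix (Fin 4) (Fin 4) ℂ, Pᴴ = P ∧ P * P = P ∧ P.rank = 3 ∧
      ∀ ρ : Matrix (Fin 4) (Fin 4) ℂ, IsDensity ρ → (wpt A ρ ∈ F ↔ P * ρ * P = ρ)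


theorem dotR_sub_right {d : ℕ} (u x y : Fin d → ℝ) : dotR u (x - y) = dotR u x - dotR u y :=
  dotProduct_sub u x y

theorem dotR_add_right {d : ℕ} (u x y : Fin d → ℝ) : dotR u (x + y) = dotR u x + dotR u y :=
  dotProduct_add u x y

theorem dotR_smul_right {d : ℕ} (u : Fin d → ℝ) (c : ℝ) (x : Fin d → ℝ) :
    dotR u (c • x) = c * dotR u x :=
  dotProduct_smul c u x

theorem dotR_add_left {d : ℕ} (u w x : Fin d → ℝ) : dotR (u + w) x = dotR u x + dotR w x :=
  add_dotProduct u w x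

theorem dotR_smul_left {d : ℕ} (c : ℝ) (u : Fin d → ℝ) (x : Fin d → ℝ) :
    dotR (c • u) x = c * dotR u x :=
  smul_dotProduct c u x

theorem dotR_comm {d : ℕ} (u x : Fin d → ℝ) : dotR u x = dotR x u :=
  dotProduct_comm u x

/-- a face is the intersection of the set with the affine hull of the face -/
theorem face_aff {C F : Set (Fin 3 → ℝ)} (hF : IsFaceOf C F) {m : Fin 3 → ℝ} (hm : m ∈ C)
    (hmF : m ∈ affineSpan ℝ F) : m ∈ F := by
  have hne : F.Nonempty := (affineSpan_nonempty ℝ).1 ⟨m, hmF⟩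
  obtain ⟨q, hq⟩ := hne.intrinsicInterior hF.1
  obtain ⟨⟨q', hq'⟩, hqi, rfl⟩ := mem_intrinsicInterior.1 hq
  let g : ℝ → affineSpan ℝ F := fun t => ⟨AffineMap.lineMap m q' t, AffineMap.lineMap_mem t hmF hq'⟩
  have hg : Continuous g := by
    apply Continuous.subtype_mk
    exact AffineMap.lineMap_continuous
  have hg1 : g 1 = ⟨q', hq'⟩ := by
    simp [g]
  have hopen : IsOpen (g ⁻¹' interior ((↑) ⁻¹' F : Set (affineSpan ℝ F))) :=
    isOpen_interior.preimage hg
  have h1 : (1:ℝ) ∈ (g ⁻¹' interior ((↑) ⁻¹' F : Set (affineSpan ℝ F))) := by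
    simp only [Set.mem_preimage, hg1]; exact hqi
  obtain ⟨ε, hε, hball⟩ := Metric.isOpen_iff.1 hopen 1 h1
  have h2 : (1 + ε/2) ∈ Metric.ball (1:ℝ) ε := by
    simp [Metric.mem_ball, abs_of_pos hε]; linarith
  have h3 : AffineMap.lineMap m q' (1 + ε/2) ∈ F := by
    have := interior_subset (hball h2)
    simpa [g] using this
  have hqF : q' ∈ F := intrinsicInterior_subset hq
  refine hF.2.left_mem_of_mem_openSegment hm (hF.2.subset h3) hqF ?_
  have hpos : 0 < 1 + ε/2 := by positivity
  refine ⟨1 - 1/(1+ε/2), 1/(1+ε/2), ?_, by positivity, by ring, ?_⟩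
  · rw [sub_pos, div_lt_one hpos]; linarith
  · rw [AffineMap.lineMap_apply_module]
    ext i
    simp
    field_simp
    ring

theorem face_of_exposed {C F : Set (Fin 3 → ℝ)} (hC : Convex ℝ C) (h : IsExposedFace C F) :
    IsFaceOf C F := by
  obtain ⟨u, rfl⟩ := h
  refine ⟨?_, ?_, ?_⟩
  · intro x hx y hy a b ha hb hab
    refine ⟨hC hx.1 hy.1 ha hb hab, fun z hz => ?_⟩
    rw [dotR_add_right, dotR_smul_right, dotR_smul_right]
    have := hx.2 z hz
    have := hy.2 z hz
    have e : dotR u z = a * dotR u z + b * dotR u z := by rw [← add_mul, hab, one_mul]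
    rw [e]; gcongr
  · exact fun x hx => hx.1
  · rintro x hx y hy z hz ⟨a, b, ha, hb, hab, rfl⟩
    refine ⟨hx, fun w hw => ?_⟩
    have h1 := hz.2 w hw
    have h2 := hz.2 y hy
    rw [dotR_add_right, dotR_smul_right, dotR_smul_right] at h1 h2
    have hb' : b = 1 - a := by linarith
    subst hb'
    have h3 : dotR u x ≤ dotR u y := by
      by_contra hlt
      push Not at hlt
      nlinarith
    have := mul_le_mul_of_nonneg_left h3 hb.le
    linarith

theorem convDim_mono {C F : Set (Fin 3 → ℝ)} (h : F ⊆ C) : convDim F ≤ convDim C :=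
  Submodule.finrank_mono (AffineSubspace.direction_le (affineSpan_mono ℝ h))

/-- supporting functional of a codimension one face -/
theorem exists_support {C F : Set (Fin 3 → ℝ)} (hC : Convex ℝ C) (hF : IsFaceOf C F)
    (hd : convDim F + 1 = convDim C) {p : Fin 3 → ℝ} (hp : p ∈ F) :
    ∃ u : Fin 3 → ℝ, (∀ y ∈ C, 0 ≤ dotR u (y - p)) ∧ (∀ y ∈ C, dotR u (y - p) = 0 ↔ y ∈ F) := by
  set DF := (affineSpan ℝ F).direction with hDF
  set DC := (affineSpan ℝ C).direction with hDC
  have hle : DF ≤ DC := AffineSubspace.direction_le (affineSpan_mono ℝ hF.2.subset)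
  have hlt : ∃ d ∈ DC, d ∉ DF := by
    by_contra hcon
    push Not at hcon
    have : DC ≤ DF := hcon
    have := Submodule.finrank_mono this
    have hd' : Module.finrank ℝ DF + 1 = Module.finrank ℝ DC := hd
    omega
  obtain ⟨d, hdC, hdF⟩ := hlt
  obtain ⟨g, hgd, hgF⟩ := Submodule.exists_le_ker_of_notMem hdF
  have hker : DC ⊓ LinearMap.ker g = DF := by
    symm
    apply Submodule.eq_of_le_of_finrank_le (le_inf hle hgF)
    have hlt : DC ⊓ LinearMap.ker g < DC := by
      refine lt_of_le_of_ne inf_le_left fun h => ?_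
      have : d ∈ DC ⊓ LinearMap.ker g := by rw [h]; exact hdC
      exact hgd this.2
    have := Submodule.finrank_lt_finrank_of_lt hlt
    have hd' : Module.finrank ℝ DF + 1 = Module.finrank ℝ DC := hd
    omega
  have hpA : p ∈ affineSpan ℝ F := subset_affineSpan ℝ F hp
  have key : ∀ y ∈ C, g (y - p) = 0 ↔ y ∈ F := by
    intro y hy
    constructor
    · intro h0
      have h1 : y - p ∈ DF := by
        rw [← hker]
        refine ⟨?_, h0⟩
        exact AffineSubspace.vsub_mem_direction (subset_affineSpan ℝ C hy)
          (subset_affineSpan ℝ C (hF.2.subset hp))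
      apply face_aff hF hy
      have := AffineSubspace.vadd_mem_of_mem_direction h1 hpA
      simpa using this
    · intro hyF
      exact hgF (AffineSubspace.vsub_mem_direction (subset_affineSpan ℝ F hyF) hpA)
  have side : (∀ y ∈ C, 0 ≤ g (y - p)) ∨ (∀ y ∈ C, 0 ≤ -g (y - p)) := by
    by_contra hcon
    push Not at hcon
    obtain ⟨⟨y, hy, hy0⟩, z, hz, hz0⟩ := hcon
    have hz0' : 0 < g (z - p) := by linarith
    have hs : 0 < g (z - p) - g (y - p) := by linarith
    have hmem : (g (z-p) / (g (z - p) - g (y - p))) • y + (-g (y-p) / (g (z - p) - g (y - p))) • z ∈ openSegment ℝ y z :=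
      ⟨_, _, by positivity, div_pos (by linarith) hs, by field_simp; ring, rfl⟩
    set m := (g (z-p) / (g (z - p) - g (y - p))) • y + (-g (y-p) / (g (z - p) - g (y - p))) • z with hm
    have hmC : m ∈ C := hC.openSegment_subset hy hz hmem
    have hgm : g (m - p) = 0 := by
      have e : m - p = (g (z-p) / (g (z - p) - g (y - p))) • (y - p) + (-g (y-p) / (g (z - p) - g (y - p))) • (z - p) := by
        have hsum : (g (z-p) / (g (z - p) - g (y - p))) + (-g (y-p) / (g (z - p) - g (y - p))) = 1 := by
          field_simp; ring
        rw [hm]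
        generalize (g (z-p) / (g (z - p) - g (y - p))) = α at hsum ⊢
        generalize (-g (y-p) / (g (z - p) - g (y - p))) = β at hsum ⊢
        obtain rfl : β = 1 - α := by linarith
        module
      rw [e, map_add, map_smul, map_smul, smul_eq_mul, smul_eq_mul]
      field_simp
      ring
    have hmF := (key m hmC).1 hgm
    have := (key y hy).2 (hF.2.left_mem_of_mem_openSegment hy hz hmF hmem)
    linarith
  have hdot : ∀ y, dotR ((dotProductEquiv ℝ (Fin 3)).symm g) y = g y := by
    intro y
    change dotProductEquiv ℝ (Fin 3) ((dotProductEquiv ℝ (Fin 3)).symm g) y = g y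
    rw [LinearEquiv.apply_symm_apply]
  rcases side with h | h
  · refine ⟨(dotProductEquiv ℝ (Fin 3)).symm g, ?_, ?_⟩
    · intro y hy; rw [hdot]; exact h y hy
    · intro y hy; rw [hdot]; exact key y hy
  · refine ⟨(-1:ℝ) • (dotProductEquiv ℝ (Fin 3)).symm g, ?_, ?_⟩
    · intro y hy; rw [dotR_smul_left, hdot]; have := h y hy; linarith
    · intro y hy; rw [dotR_smul_left, hdot, ← key y hy, neg_one_mul, neg_eq_zero]

/-- two distinct segments that are faces meet in at most a point -/
theorem face_inter {C F G : Set (Fin 3 → ℝ)} (hF : IsFaceOf C F) (hG : IsFaceOf C G)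
    (hdF : convDim F = 1) (hdG : convDim G = 1) (hne : F ≠ G) {p m : Fin 3 → ℝ}
    (hpF : p ∈ F) (hpG : p ∈ G) (hmF : m ∈ F) (hmG : m ∈ G) : m = p := by
  by_contra hmp
  have hle : ∀ K : Set (Fin 3 → ℝ), convDim K = 1 → p ∈ K → m ∈ K →
      (affineSpan ℝ K).direction = Submodule.span ℝ {m - p} := by
    intro K hK hpK hmK
    symm
    apply Submodule.eq_of_le_of_finrank_le
    · rw [Submodule.span_singleton_le_iff_mem]
      exact AffineSubspace.vsub_mem_direction (subset_affineSpan ℝ K hmK) (subset_affineSpan ℝ K hpK)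
    · rw [finrank_span_singleton (sub_ne_zero.2 hmp)]
      exact hK.le
  have heq : affineSpan ℝ F = affineSpan ℝ G :=
    AffineSubspace.ext_of_direction_eq
      ((hle F hdF hpF hmF).trans (hle G hdG hpG hmG).symm)
      ⟨p, subset_affineSpan ℝ F hpF, subset_affineSpan ℝ G hpG⟩
  apply hne
  apply Set.Subset.antisymm
  · intro y hy
    exact face_aff hG (hF.2.subset hy) (heq ▸ subset_affineSpan ℝ F hy)
  · intro y hy
    exact face_aff hF (hG.2.subset hy) (heq ▸ subset_affineSpan ℝ G hy)

/-- independence of the supporting functionals of two distinct proper faces -/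
theorem support_indep {C F G : Set (Fin 3 → ℝ)} {p u w : Fin 3 → ℝ} (hFC : F ⊆ C) (hGC : G ⊆ C)
    (hF : F ≠ C) (hG : G ≠ C) (hne : F ≠ G)
    (hu' : ∀ y ∈ C, dotR u (y - p) = 0 ↔ y ∈ F)
    (hw' : ∀ y ∈ C, dotR w (y - p) = 0 ↔ y ∈ G)
    {s t : ℝ} (h : ∀ y ∈ C, s * dotR u (y - p) + t * dotR w (y - p) = 0) : s = 0 ∧ t = 0 := by
  have hF' : ∃ y ∈ C, y ∉ F := by
    by_contra hcon; push Not at hcon; exact hF (Set.Subset.antisymm hFC hcon)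
  have hG' : ∃ y ∈ C, y ∉ G := by
    by_contra hcon; push Not at hcon; exact hG (Set.Subset.antisymm hGC hcon)
  obtain ⟨y, hyC, hyF⟩ := hF'
  obtain ⟨z, hzC, hzG⟩ := hG'
  have hy : dotR u (y - p) ≠ 0 := fun h0 => hyF ((hu' y hyC).1 h0)
  have hz : dotR w (z - p) ≠ 0 := fun h0 => hzG ((hw' z hzC).1 h0)
  by_cases hs : s = 0
  · refine ⟨hs, ?_⟩
    have := h z hzC
    simpa [hs, hz] using this
  by_cases ht : t = 0
  · refine ⟨?_, ht⟩
    have := h y hyC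
    simpa [ht, hy] using this
  exfalso
  apply hne
  ext x
  constructor
  · intro hx
    have h0 := (hu' x (hFC hx)).2 hx
    have h1 := h x (hFC hx)
    rw [h0, mul_zero, zero_add] at h1
    exact (hw' x (hFC hx)).1 ((mul_eq_zero.1 h1).resolve_left ht)
  · intro hx
    have h0 := (hw' x (hGC hx)).2 hx
    have h1 := h x (hGC hx)
    rw [h0, mul_zero, add_zero] at h1
    exact (hu' x (hGC hx)).1 ((mul_eq_zero.1 h1).resolve_left hs)

/-- if a third supporting functional depends on those of two facets, its face lies in both -/
theorem third_support {C F₁ F₂ G : Set (Fin 3 → ℝ)} {p u₁ u₂ w : Fin 3 → ℝ}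
    (hGC : G ⊆ C) (hF₁C : F₁ ⊆ C) (hF₂C : F₂ ⊆ C)
    (hC : convDim C = 3) (hF₁ : convDim F₁ = 2) (hF₂ : convDim F₂ = 2) (hG : convDim G = 1)
    (hu₁ : ∀ y ∈ C, 0 ≤ dotR u₁ (y - p)) (hu₁' : ∀ y ∈ C, dotR u₁ (y - p) = 0 ↔ y ∈ F₁)
    (hu₂ : ∀ y ∈ C, 0 ≤ dotR u₂ (y - p)) (hu₂' : ∀ y ∈ C, dotR u₂ (y - p) = 0 ↔ y ∈ F₂)
    (hw : ∀ y ∈ C, 0 ≤ dotR w (y - p)) (hw' : ∀ y ∈ C, dotR w (y - p) = 0 ↔ y ∈ G)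
    {a b : ℝ} (h : ∀ y ∈ C, dotR w (y - p) = a * dotR u₁ (y - p) + b * dotR u₂ (y - p)) :
    G ⊆ F₁ ∧ G ⊆ F₂ := by
  rcases le_or_gt a 0 with ha | ha
  · rcases le_or_gt b 0 with hb | hb
    · exfalso
      have : C ⊆ G := by
        intro y hy
        rw [← hw' y hy]
        have h1 := hu₁ y hy
        have h2 := hu₂ y hy
        have h3 := hw y hy
        have h4 := h y hy
        nlinarith
      have := convDim_mono this
      omega
    · exfalso
      have : F₂ ⊆ G := by
        intro y hyF
        have hy := hF₂C hyF
        rw [← hw' y hy]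
        have h0 := (hu₂' y hy).2 hyF
        have h1 := hu₁ y hy
        have h3 := hw y hy
        have h4 := h y hy
        rw [h0] at h4
        nlinarith
      have := convDim_mono this
      omega
  · rcases le_or_gt b 0 with hb | hb
    · exfalso
      have : F₁ ⊆ G := by
        intro y hyF
        have hy := hF₁C hyF
        rw [← hw' y hy]
        have h0 := (hu₁' y hy).2 hyF
        have h1 := hu₂ y hy
        have h3 := hw y hy
        have h4 := h y hy
        rw [h0] at h4
        nlinarith
      have := convDim_mono this
      omega
    · constructor
      · intro y hy
        have h0 := (hw' y (hGC hy)).2 hy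
        have h1 := hu₁ y (hGC hy)
        have h2 := hu₂ y (hGC hy)
        have h4 := h y (hGC hy)
        rw [← hu₁' y (hGC hy)]
        nlinarith [mul_nonneg ha.le h1, mul_nonneg hb.le h2]
      · intro y hy
        have h0 := (hw' y (hGC hy)).2 hy
        have h1 := hu₁ y (hGC hy)
        have h2 := hu₂ y (hGC hy)
        have h4 := h y (hGC hy)
        rw [← hu₂' y (hGC hy)]
        nlinarith [mul_nonneg ha.le h1, mul_nonneg hb.le h2]

theorem penalty {X : Type*} [TopologicalSpace X] {K : Set X} (hK : IsCompact K) {a b : X → ℝ}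
    (ha : Continuous a) (hb : Continuous b) (hb0 : ∀ x ∈ K, 0 ≤ b x)
    (hab : ∀ x ∈ K, b x = 0 → 0 < a x) : ∃ M : ℝ, 0 ≤ M ∧ ∀ x ∈ K, 0 < a x + M * b x := by
  have := hK.elim_finite_subcover (fun n : ℕ => {x | 0 < a x + n * b x})
    (fun n => isOpen_lt continuous_const (by fun_prop)) (by
      intro x hx
      rw [Set.mem_iUnion]
      rcases (hb0 x hx).eq_or_lt with h | h
      · exact ⟨0, by simpa using hab x hx h.symm⟩
      · obtain ⟨n, hn⟩ := exists_nat_gt (-a x / b x)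
        refine ⟨n, ?_⟩
        rw [div_lt_iff₀ h] at hn
        simp only [Set.mem_ofPred_eq]; linarith)
  obtain ⟨t, ht⟩ := this
  refine ⟨(t.sup id : ℕ), by positivity, fun x hx => ?_⟩
  obtain ⟨n, hn, hxn⟩ := Set.mem_iUnion₂.1 (ht hx)
  have h1 : (n:ℝ) ≤ (t.sup id : ℕ) := by exact_mod_cast Finset.le_sup (f := id) hn
  simp only [Set.mem_ofPred_eq] at hxn
  nlinarith [hb0 x hx]

section vec

variable {E : Type*} [NormedAddCommGroup E] [InnerProductSpace ℂ E]

/-- vector state -/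
def vst (T : Fin 3 → (E →ₗ[ℂ] E)) (v : E) : Fin 3 → ℝ := fun i => (inner ℂ v (T i v)).re

/-- set of vector states on a subspace -/
def vstSet (T : Fin 3 → (E →ₗ[ℂ] E)) (V : Submodule ℂ E) : Set (Fin 3 → ℝ) :=
  vst T '' {v | v ∈ V ∧ ‖v‖ = 1}

/-- the shifted pencil -/
def pencil (T : Fin 3 → (E →ₗ[ℂ] E)) (p u : Fin 3 → ℝ) : E →ₗ[ℂ] E :=
  ∑ i, (u i : ℂ) • (T i - (p i : ℂ) • LinearMap.id)

theorem pencil_symm {T : Fin 3 → (E →ₗ[ℂ] E)} (hT : ∀ i, (T i).IsSymmetric) (p u : Fin 3 → ℝ) :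
    (pencil T p u).IsSymmetric := by
  intro v w
  simp only [pencil, LinearMap.sum_apply, LinearMap.smul_apply, LinearMap.sub_apply,
    LinearMap.id_apply, sum_inner, inner_sum, inner_smul_left, inner_smul_right, inner_sub_left,
    inner_sub_right, Complex.conj_ofReal]
  refine Finset.sum_congr rfl fun i _ => ?_
  rw [hT i v w]

theorem pencil_form (T : Fin 3 → (E →ₗ[ℂ] E)) (p u : Fin 3 → ℝ) (v : E) :
    (inner ℂ v (pencil T p u v)).re = dotR u (vst T v - ‖v‖ ^ 2 • p) := by
  simp only [pencil, LinearMap.sum_apply, LinearMap.smul_apply, LinearMap.sub_apply,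
    LinearMap.id_apply, inner_sum, inner_smul_right, inner_sub_right,
    inner_self_eq_norm_sq_to_K, Complex.re_sum, dotR]
  refine Finset.sum_congr rfl fun i _ => ?_
  rw [Complex.re_ofReal_mul, Complex.sub_re, Complex.re_ofReal_mul]
  simp only [Pi.sub_apply, Pi.smul_apply, smul_eq_mul]
  have e : ((‖v‖ : ℂ) ^ 2).re = ‖v‖ ^ 2 := by norm_cast
  rw [mul_comm (p i)]
  change _ * (_ - ((‖v‖ : ℂ) ^ 2).re * _) = _
  rw [e]
  rfl

theorem vst_smul (T : Fin 3 → (E →ₗ[ℂ] E)) (c : ℂ) (v : E) : vst T (c • v) = ‖c‖ ^ 2 • vst T v := by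
  ext i
  simp only [vst, map_smul, inner_smul_left, inner_smul_right, Pi.smul_apply, smul_eq_mul]
  rw [← mul_assoc, Complex.mul_conj']
  norm_cast
  rw [Complex.re_ofReal_mul]

theorem vst_normalize (T : Fin 3 → (E →ₗ[ℂ] E)) {v : E} (hv : v ≠ 0) :
    vst T v = ‖v‖ ^ 2 • vst T (((‖v‖⁻¹ : ℝ) : ℂ) • v) := by
  rw [vst_smul, smul_smul]
  have : ‖v‖ ≠ 0 := norm_ne_zero_iff.2 hv
  have e : ‖v‖ ^ 2 * ‖((‖v‖⁻¹ : ℝ) : ℂ)‖ ^ 2 = 1 := by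
    rw [Complex.norm_real, norm_inv, norm_norm]; field_simp
  rw [e, one_smul]

theorem norm_normalize {v : E} (hv : v ≠ 0) : ‖((‖v‖⁻¹ : ℝ) : ℂ) • v‖ = 1 := by
  have : ‖v‖ ≠ 0 := norm_ne_zero_iff.2 hv
  rw [norm_smul, Complex.norm_real, norm_inv, norm_norm]; field_simp

/-- positivity on unit vectors gives positivity -/
theorem pencil_nonneg {T : Fin 3 → (E →ₗ[ℂ] E)} {p u : Fin 3 → ℝ} {V : Submodule ℂ E}
    (h : ∀ y ∈ vstSet T V, 0 ≤ dotR u (y - p)) {v : E} (hv : v ∈ V) :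
    0 ≤ (inner ℂ v (pencil T p u v)).re := by
  by_cases hv0 : v = 0
  · simp [hv0]
  rw [pencil_form, vst_normalize T hv0, ← smul_sub, dotR_smul_right]
  have := h _ ⟨_, ⟨V.smul_mem _ hv, norm_normalize hv0⟩, rfl⟩
  positivity

theorem polarize {C : E →ₗ[ℂ] E} (hC : C.IsSymmetric) {V : Submodule ℂ E}
    (hpos : ∀ v ∈ V, 0 ≤ (inner ℂ v (C v)).re) {x : E} (hx : x ∈ V)
    (hx0 : (inner ℂ x (C x)).re = 0) {v : E} (hv : v ∈ V) : inner ℂ v (C x) = 0 := by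
  have key : ∀ w ∈ V, (inner ℂ w (C x)).re = 0 := by
    intro w hw
    have h1 : ∀ t : ℝ, 0 ≤ 2 * t * (inner ℂ w (C x)).re + t ^ 2 * (inner ℂ w (C w)).re := by
      intro t
      have := hpos (x + (t:ℂ) • w) (V.add_mem hx (V.smul_mem _ hw))
      simp only [map_add, map_smul, inner_add_left, inner_add_right, inner_smul_left,
        inner_smul_right, Complex.conj_ofReal, Complex.add_re, Complex.re_ofReal_mul, hx0] at this
      have e : (inner ℂ x (C w)).re = (inner ℂ w (C x)).re := by
        rw [← hC x w, ← inner_conj_symm, Complex.conj_re]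
      rw [e] at this
      linarith
    have ha := hpos w hw
    set a := (inner ℂ w (C w)).re
    set b := (inner ℂ w (C x)).re
    have h2 := h1 (-b / (a + 1))
    have ha1 : 0 < a + 1 := by linarith
    have e : 2 * (-b / (a + 1)) * b + (-b / (a + 1)) ^ 2 * a = - (b ^ 2 * (a + 2)) / (a + 1) ^ 2 := by
      field_simp; ring
    rw [e, le_div_iff₀ (by positivity)] at h2
    have : b ^ 2 ≤ 0 := by nlinarith [sq_nonneg b]
    exact pow_eq_zero_iff (two_ne_zero) |>.1 (le_antisymm this (sq_nonneg b))
  have h := key (inner ℂ v (C x) • v) (V.smul_mem _ hv)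
  rw [inner_smul_left, Complex.conj_mul'] at h
  norm_cast at h
  simpa using h

/-- corner points force eigenvector relations -/
theorem corner_eigen {T : Fin 3 → (E →ₗ[ℂ] E)} (hT : ∀ i, (T i).IsSymmetric) {p : Fin 3 → ℝ}
    {V : Submodule ℂ E} {u : Fin 3 → (Fin 3 → ℝ)} (hu : LinearIndependent ℝ u)
    (hpos : ∀ j, ∀ y ∈ vstSet T V, 0 ≤ dotR (u j) (y - p)) {x : E} (hx : x ∈ V) (hxn : ‖x‖ = 1)
    (hxp : vst T x = p) {v : E} (hv : v ∈ V) (i : Fin 3) :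
    inner ℂ v (T i x - (p i : ℂ) • x) = 0 := by
  let Z : (Fin 3 → ℝ) →ₗ[ℝ] ℂ :=
    { toFun := fun w => inner ℂ v (pencil T p w x)
      map_add' := by
        intro a b
        simp only [pencil, Pi.add_apply, Complex.ofReal_add, add_smul, Finset.sum_add_distrib,
          LinearMap.add_apply, inner_add_right]
      map_smul' := by
        intro a b
        simp only [pencil, Pi.smul_apply, smul_eq_mul, Complex.ofReal_mul, mul_smul,
          ← Finset.smul_sum, LinearMap.smul_apply, inner_smul_right, RingHom.id_apply,
          Complex.real_smul] }
  have hZ : LinearMap.ker Z = ⊤ := by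
    rw [eq_top_iff, ← hu.span_eq_top_of_card_eq_finrank (by simp), Submodule.span_le]
    rintro _ ⟨j, rfl⟩
    refine polarize (pencil_symm hT p (u j)) (fun v hv => pencil_nonneg (hpos j) hv) hx ?_ hv
    rw [pencil_form, hxp, hxn]
    simp [dotR]
  have : Z (Pi.single i 1) = 0 := by
    have h : Pi.single i 1 ∈ LinearMap.ker Z := hZ ▸ Submodule.mem_top
    exact h
  have h2 : Z (Pi.single i 1) = inner ℂ v (T i x - (p i : ℂ) • x) := by
    change inner ℂ v (pencil T p (Pi.single i 1) x) = _
    congr 1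
    simp only [pencil, LinearMap.sum_apply]
    rw [Finset.sum_eq_single i]
    · simp
    · intro j _ hj; simp [hj]
    · simp
  rw [← h2, this]

/-- a face of a convex hull cut out by a functional is the hull of the generators in it -/
theorem hull_face {S : Set (Fin 3 → ℝ)} {u p : Fin 3 → ℝ} (h : ∀ y ∈ S, 0 ≤ dotR u (y - p))
    {y : Fin 3 → ℝ} (hy : y ∈ convexHull ℝ S) (h0 : dotR u (y - p) = 0) :
    y ∈ convexHull ℝ {s ∈ S | dotR u (s - p) = 0} := by
  have hsub : convexHull ℝ S ⊆ {y | 0 ≤ dotR u (y - p) ∧ (dotR u (y - p) = 0 →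
      y ∈ convexHull ℝ {s ∈ S | dotR u (s - p) = 0})} := by
    apply convexHull_min
    · intro s hs
      exact ⟨h s hs, fun h0 => subset_convexHull ℝ _ ⟨hs, h0⟩⟩
    · rintro x ⟨hx, hx'⟩ z ⟨hz, hz'⟩ a b ha hb hab
      have e : dotR u (a • x + b • z - p) = a * dotR u (x - p) + b * dotR u (z - p) := by
        obtain rfl : b = 1 - a := by linarith
        simp only [dotR_sub_right, dotR_add_right, dotR_smul_right]; ring
      refine ⟨by rw [e]; positivity, fun h0 => ?_⟩
      rw [e] at h0
      have h1 : a * dotR u (x - p) = 0 := by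
        have := mul_nonneg ha hx; have := mul_nonneg hb hz; linarith
      have h2 : b * dotR u (z - p) = 0 := by
        have := mul_nonneg ha hx; have := mul_nonneg hb hz; linarith
      rcases mul_eq_zero.1 h1 with rfl | h1
      · have : b = 1 := by linarith
        subst this
        simpa using hz' (by simpa using h2)
      rcases mul_eq_zero.1 h2 with rfl | h2
      · have : a = 1 := by linarith
        subst this
        simpa using hx' (by simpa using h1)
      exact convex_convexHull ℝ _ (hx' h1) (hz' h2) ha hb hab
  exact (hsub hy).2 h0

theorem hull_nonneg {S : Set (Fin 3 → ℝ)} {u p : Fin 3 → ℝ} (h : ∀ y ∈ S, 0 ≤ dotR u (y - p))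
    {y : Fin 3 → ℝ} (hy : y ∈ convexHull ℝ S) : 0 ≤ dotR u (y - p) := by
  have hsub : convexHull ℝ S ⊆ {y | 0 ≤ dotR u (y - p)} := by
    apply convexHull_min h
    intro x hx z hz a b ha hb hab
    have hx' : 0 ≤ dotR u (x - p) := hx
    have hz' : 0 ≤ dotR u (z - p) := hz
    have e : dotR u (a • x + b • z - p) = a * dotR u (x - p) + b * dotR u (z - p) := by
      obtain rfl : b = 1 - a := by linarith
      simp only [dotR_sub_right, dotR_add_right, dotR_smul_right]; ring
    change 0 ≤ dotR u (a • x + b • z - p)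
    rw [e]; positivity
  exact hsub hy

/-- the face cut out by a supporting functional comes from the kernel of the pencil -/
theorem face_eq_hull {T : Fin 3 → (E →ₗ[ℂ] E)} (hT : ∀ i, (T i).IsSymmetric) {p u : Fin 3 → ℝ}
    {H : Set (Fin 3 → ℝ)} (hHW : H ⊆ convexHull ℝ (vstSet T ⊤))
    (hu : ∀ y ∈ convexHull ℝ (vstSet T ⊤), 0 ≤ dotR u (y - p))
    (hu' : ∀ y ∈ convexHull ℝ (vstSet T ⊤), dotR u (y - p) = 0 ↔ y ∈ H) :
    H = convexHull ℝ (vstSet T (LinearMap.ker (pencil T p u))) := by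
  have hS : ∀ y ∈ vstSet T ⊤, 0 ≤ dotR u (y - p) := fun y hy => hu y (subset_convexHull ℝ _ hy)
  have hset : {s ∈ vstSet T ⊤ | dotR u (s - p) = 0} = vstSet T (LinearMap.ker (pencil T p u)) := by
    ext s
    constructor
    · rintro ⟨⟨v, ⟨-, hv⟩, rfl⟩, h0⟩
      refine ⟨v, ⟨?_, hv⟩, rfl⟩
      have := polarize (pencil_symm hT p u) (V := ⊤) (fun v hv => pencil_nonneg hS hv)
        (x := v) trivial (by rw [pencil_form, hv]; simpa using h0)
        (v := pencil T p u v) trivial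
      simpa using this
    · rintro ⟨v, ⟨hv, hvn⟩, rfl⟩
      refine ⟨⟨v, ⟨trivial, hvn⟩, rfl⟩, ?_⟩
      have := pencil_form T p u v
      rw [LinearMap.mem_ker.1 hv, inner_zero_right, hvn] at this
      simpa using this.symm
  rw [← hset]
  apply Set.Subset.antisymm
  · intro y hy
    exact hull_face hS (hHW hy) ((hu' y (hHW hy)).2 hy)
  · intro y hy
    have hyW : y ∈ convexHull ℝ (vstSet T ⊤) := convexHull_mono (fun s hs => hs.1) hy
    rw [← hu' y hyW]
    apply le_antisymm _ (hu y hyW)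
    have := hull_nonneg (u := -u) (p := p) (S := {s ∈ vstSet T ⊤ | dotR u (s - p) = 0}) (by
      rintro s ⟨-, hs⟩
      rw [← neg_one_smul ℝ u, dotR_smul_left, hs, mul_zero]) hy
    rw [← neg_one_smul ℝ u, dotR_smul_left] at this
    linarith

end vec

theorem disk_of_ball (L : EuclideanSpace ℝ (Fin 3) →ₗ[ℝ] (Fin 3 → ℝ)) (m : Fin 3 → ℝ)
    (hL : Module.finrank ℝ (LinearMap.range L) = 2) :
    IsEllipticDisk ((fun r => m + L r) '' Metric.closedBall 0 1) := by
  have h1 := LinearMap.finrank_range_add_finrank_ker L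
  have h2 := Submodule.finrank_add_finrank_orthogonal (LinearMap.ker L)
  have h3 : Module.finrank ℝ (LinearMap.ker L)ᗮ = 2 := by
    rw [finrank_euclideanSpace_fin] at h1 h2
    omega
  let b : OrthonormalBasis (Fin 2) ℝ (LinearMap.ker L)ᗮ :=
    (stdOrthonormalBasis ℝ (LinearMap.ker L)ᗮ).reindex (finCongr h3)
  let g : (Fin 2 → ℝ) →ₗ[ℝ] EuclideanSpace ℝ (Fin 3) :=
    (LinearMap.ker L)ᗮ.subtype ∘ₗ b.repr.symm.toLinearEquiv.toLinearMap ∘ₗ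
      (WithLp.linearEquiv 2 ℝ (Fin 2 → ℝ)).symm.toLinearMap
  have hgK : ∀ v, g v ∈ (LinearMap.ker L)ᗮ := fun v => Subtype.property _
  have hgn : ∀ v, ‖g v‖ ^ 2 = v 0 ^ 2 + v 1 ^ 2 := by
    intro v
    have : ‖g v‖ = ‖(WithLp.toLp 2 v : EuclideanSpace ℝ (Fin 2))‖ := by
      change ‖b.repr.symm (WithLp.toLp 2 v)‖ = _
      exact b.repr.symm.norm_map _
    rw [this, EuclideanSpace.real_norm_sq_eq, Fin.sum_univ_two]
  have hgs : ∀ s ∈ (LinearMap.ker L)ᗮ, ∃ v, g v = s := by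
    intro s hs
    refine ⟨WithLp.ofLp (b.repr ⟨s, hs⟩), ?_⟩
    change ((b.repr.symm (WithLp.toLp 2 (WithLp.ofLp (b.repr ⟨s, hs⟩))) : (LinearMap.ker L)ᗮ) : EuclideanSpace ℝ (Fin 3)) = s
    simp
  refine ⟨AffineMap.const ℝ _ m + (L ∘ₗ g).toAffineMap, ?_, ?_⟩
  · intro v w hvw
    have hvw' : L (g v) = L (g w) := by
      simpa using hvw
    have hk : g (v - w) ∈ LinearMap.ker L := by
      rw [LinearMap.mem_ker, map_sub, map_sub, hvw', sub_self]
    have h0 : g (v - w) = 0 := by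
      have := (LinearMap.ker L).inner_right_of_mem_orthogonal hk (hgK (v - w))
      simpa using this
    have hn := hgn (v - w)
    rw [h0] at hn
    simp at hn
    ext i
    fin_cases i
    · simp; nlinarith [sq_nonneg (v 0 - w 0), sq_nonneg (v 1 - w 1)]
    · simp; nlinarith [sq_nonneg (v 0 - w 0), sq_nonneg (v 1 - w 1)]
  · ext y
    constructor
    · rintro ⟨r, hr, rfl⟩
      have hr' : ‖r‖ ≤ 1 := by simpa using hr
      obtain ⟨k, hk, s, hs, hks⟩ := (LinearMap.ker L).exists_add_mem_mem_orthogonal r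
      obtain ⟨v, hv⟩ := hgs s hs
      refine ⟨v, ?_, ?_⟩
      · change v 0 ^ 2 + v 1 ^ 2 ≤ 1
        rw [← hgn, hv]
        have horth : inner ℝ k s = 0 := (LinearMap.ker L).inner_right_of_mem_orthogonal hk hs
        have := norm_add_sq_eq_norm_sq_add_norm_sq_of_inner_eq_zero k s horth
        rw [← hks] at this
        nlinarith [norm_nonneg r, norm_nonneg k, norm_nonneg s]
      · have : L r = L s := by
          rw [hks, map_add, LinearMap.mem_ker.1 hk, zero_add]
        simp [hv, this]
    · rintro ⟨v, hv, rfl⟩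
      have hv' : v 0 ^ 2 + v 1 ^ 2 ≤ 1 := hv
      refine ⟨g v, ?_, by simp⟩
      rw [mem_closedBall_zero_iff]
      rw [← hgn] at hv'
      nlinarith [norm_nonneg (g v)]

theorem convDim_ball (L : EuclideanSpace ℝ (Fin 3) →ₗ[ℝ] (Fin 3 → ℝ)) (m : Fin 3 → ℝ) :
    convDim ((fun r => m + L r) '' Metric.closedBall 0 1) = Module.finrank ℝ (LinearMap.range L) := by
  let φ : EuclideanSpace ℝ (Fin 3) →ᵃ[ℝ] (Fin 3 → ℝ) := AffineMap.const ℝ _ m + L.toAffineMap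
  have e : ((fun r => m + L r) '' Metric.closedBall 0 1) = φ '' Metric.closedBall 0 1 := by
    apply Set.image_congr; intro r _; simp [φ]
  have ht : affineSpan ℝ (Metric.closedBall (0:EuclideanSpace ℝ (Fin 3)) 1) = ⊤ := by
    apply affineSpan_eq_top_of_nonempty_interior
    rw [(convex_closedBall (0:EuclideanSpace ℝ (Fin 3)) 1).convexHull_eq]
    exact ⟨0, Metric.ball_subset_interior_closedBall (Metric.mem_ball_self one_pos)⟩
  unfold convDim
  rw [e, ← AffineSubspace.map_span, ht, AffineSubspace.map_direction, AffineSubspace.direction_top,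
    Submodule.map_top]
  have : φ.linear = L := by
    ext; simp [φ]
  rw [this]

section vec

variable {E : Type*} [NormedAddCommGroup E] [InnerProductSpace ℂ E] [FiniteDimensional ℂ E]

theorem bloch {T : Fin 3 → (E →ₗ[ℂ] E)} (hT : ∀ i, (T i).IsSymmetric) {V : Submodule ℂ E}
    (hV : Module.finrank ℂ V = 2) :
    ∃ (L : EuclideanSpace ℝ (Fin 3) →ₗ[ℝ] (Fin 3 → ℝ)) (m : Fin 3 → ℝ),
      vstSet T V = (fun r => m + L r) '' Metric.sphere 0 1 := by
  let b : OrthonormalBasis (Fin 2) ℂ V := (stdOrthonormalBasis ℂ V).reindex (finCongr hV)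
  obtain ⟨e, he⟩ : ∃ e : E, e = b 0 := ⟨_, rfl⟩
  obtain ⟨f, hf⟩ : ∃ f : E, f = b 1 := ⟨_, rfl⟩
  have heV : e ∈ V := he ▸ (b 0).2
  have hfV : f ∈ V := hf ▸ (b 1).2
  have hspan : ∀ v ∈ V, ∃ α β : ℂ, v = α • e + β • f := by
    intro v hv
    have := b.sum_repr ⟨v, hv⟩
    rw [Fin.sum_univ_two] at this
    refine ⟨b.repr ⟨v, hv⟩ 0, b.repr ⟨v, hv⟩ 1, ?_⟩
    rw [he, hf]
    exact (congrArg Subtype.val this).symm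
  have hnorm : ∀ α β : ℂ, ‖α • e + β • f‖ ^ 2 = ‖α‖ ^ 2 + ‖β‖ ^ 2 := by
    intro α β
    have h1 : ‖α • e + β • f‖ = ‖α • b 0 + β • b 1‖ := by rw [he, hf]; rfl
    have h2 : inner ℂ (α • b 0) (β • b 1) = 0 := by
      rw [inner_smul_left, inner_smul_right, b.inner_eq_ite]; simp
    have h3 := norm_add_sq_eq_norm_sq_add_norm_sq_of_inner_eq_zero _ _ h2
    rw [h1]
    simp only [norm_smul, b.norm_eq_one, mul_one] at h3
    nlinarith
  have hform : ∀ (α β : ℂ) (i : Fin 3), vst T (α • e + β • f) i =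
      ‖α‖ ^ 2 * vst T e i + ‖β‖ ^ 2 * vst T f i +
        2 * (starRingEnd ℂ α * β * inner ℂ e (T i f)).re := by
    intro α β i
    have hsym : inner ℂ f (T i e) = starRingEnd ℂ (inner ℂ e (T i f)) := by
      rw [← hT i f e, inner_conj_symm]
    have h1 : vst T (α • e) i = ‖α‖ ^ 2 * vst T e i := by rw [vst_smul]; rfl
    have h2 : vst T (β • f) i = ‖β‖ ^ 2 * vst T f i := by rw [vst_smul]; rfl
    rw [← h1, ← h2]
    simp only [vst, map_add, inner_add_left, inner_add_right, Complex.add_re]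
    have h3 : (inner ℂ (α • e) (T i (β • f))).re = (starRingEnd ℂ α * β * inner ℂ e (T i f)).re := by
      rw [map_smul, inner_smul_left, inner_smul_right]; ring_nf
    have h4 : (inner ℂ (β • f) (T i (α • e))).re = (starRingEnd ℂ α * β * inner ℂ e (T i f)).re := by
      rw [map_smul, inner_smul_left, inner_smul_right, hsym, ← Complex.conj_re]
      simp only [map_mul, Complex.conj_conj]; ring_nf
    rw [h3, h4]; ring
  clear_value b
  let L : EuclideanSpace ℝ (Fin 3) →ₗ[ℝ] (Fin 3 → ℝ) :=
    { toFun := fun r => fun i => r 0 * (inner ℂ e (T i f)).re - r 1 * (inner ℂ e (T i f)).im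
        + r 2 * ((vst T e i - vst T f i) / 2)
      map_add' := by intro r s; ext i; simp; ring
      map_smul' := by intro c s; ext i; simp; ring }
  refine ⟨L, fun i => (vst T e i + vst T f i) / 2, ?_⟩
  have hkey : ∀ (α β : ℂ) (r : EuclideanSpace ℝ (Fin 3)), ‖α‖ ^ 2 + ‖β‖ ^ 2 = 1 →
      2 * (starRingEnd ℂ α * β).re = r 0 → 2 * (starRingEnd ℂ α * β).im = r 1 →
      ‖α‖ ^ 2 - ‖β‖ ^ 2 = r 2 →
      (fun i => (vst T e i + vst T f i) / 2) + L r = vst T (α • e + β • f) := by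
    intro α β r h h0 h1 h2
    ext i
    rw [hform, Complex.mul_re]
    change _ + (_ : ℝ) = _
    change _ + (r 0 * (inner ℂ e (T i f)).re - r 1 * (inner ℂ e (T i f)).im
        + r 2 * ((vst T e i - vst T f i) / 2)) = _
    rw [← h0, ← h1, ← h2]
    have hβ : ‖β‖ ^ 2 = 1 - ‖α‖ ^ 2 := by linarith
    rw [hβ]
    ring
  ext y
  constructor
  · rintro ⟨v, ⟨hv, hvn⟩, rfl⟩
    obtain ⟨α, β, rfl⟩ := hspan v hv
    have h1 : ‖α‖ ^ 2 + ‖β‖ ^ 2 = 1 := by rw [← hnorm, hvn]; norm_num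
    let r : EuclideanSpace ℝ (Fin 3) :=
      !₂[2 * (starRingEnd ℂ α * β).re, 2 * (starRingEnd ℂ α * β).im, ‖α‖ ^ 2 - ‖β‖ ^ 2]
    refine ⟨r, ?_, hkey α β r h1 rfl rfl rfl⟩
    rw [mem_sphere_zero_iff_norm]
    have : ‖r‖ ^ 2 = 1 := by
      rw [EuclideanSpace.real_norm_sq_eq, Fin.sum_univ_three]
      change (2 * (starRingEnd ℂ α * β).re) ^ 2 + (2 * (starRingEnd ℂ α * β).im) ^ 2 +
        (‖α‖ ^ 2 - ‖β‖ ^ 2) ^ 2 = 1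
      have h1' : (1:ℝ) = (‖α‖ ^ 2 + ‖β‖ ^ 2) ^ 2 := by rw [h1]; norm_num
      rw [h1', Complex.sq_norm, Complex.sq_norm, Complex.normSq_apply,
        Complex.normSq_apply, Complex.mul_re, Complex.mul_im, Complex.conj_re, Complex.conj_im]
      ring
    nlinarith [norm_nonneg r]
  · rintro ⟨r, hr, rfl⟩
    rw [mem_sphere_zero_iff_norm] at hr
    have hr2 : r 0 ^ 2 + r 1 ^ 2 + r 2 ^ 2 = 1 := by
      have := EuclideanSpace.real_norm_sq_eq r
      rw [hr, Fin.sum_univ_three] at this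
      linarith
    have hab : ∃ α β : ℂ, ‖α‖ ^ 2 + ‖β‖ ^ 2 = 1 ∧ 2 * (starRingEnd ℂ α * β).re = r 0 ∧
        2 * (starRingEnd ℂ α * β).im = r 1 ∧ ‖α‖ ^ 2 - ‖β‖ ^ 2 = r 2 := by
      by_cases h : r 2 = -1
      · refine ⟨0, 1, by simp, ?_, ?_, by simp [h]⟩
        · rw [h] at hr2; simp; nlinarith [sq_nonneg (r 0), sq_nonneg (r 1)]
        · rw [h] at hr2; simp; nlinarith [sq_nonneg (r 0), sq_nonneg (r 1)]
      · have hpos : 0 < (1 + r 2) / 2 := by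
          have : -1 ≤ r 2 := by nlinarith [sq_nonneg (r 0), sq_nonneg (r 1)]
          have := lt_of_le_of_ne this (Ne.symm h)
          linarith
        obtain ⟨a, ha, ha2⟩ : ∃ a : ℝ, 0 < a ∧ a ^ 2 = (1 + r 2) / 2 :=
          ⟨Real.sqrt _, Real.sqrt_pos.2 hpos, Real.sq_sqrt hpos.le⟩
        have hβ : ‖(⟨r 0 / (2 * a), r 1 / (2 * a)⟩ : ℂ)‖ ^ 2 = (1 - r 2) / 2 := by
          rw [Complex.sq_norm, Complex.normSq_apply]
          field_simp
          nlinarith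
        have hα : ‖(a : ℂ)‖ ^ 2 = (1 + r 2) / 2 := by
          rw [Complex.norm_real, Real.norm_eq_abs, sq_abs, ha2]
        refine ⟨a, ⟨r 0 / (2 * a), r 1 / (2 * a)⟩, ?_, ?_, ?_, ?_⟩
        · rw [hα, hβ]; ring
        · rw [Complex.conj_ofReal, Complex.re_ofReal_mul]; field_simp
        · rw [Complex.conj_ofReal, Complex.im_ofReal_mul]; field_simp
        · rw [hα, hβ]; ring
    obtain ⟨α, β, h, h0, h1, h2⟩ := hab
    refine ⟨α • e + β • f, ⟨V.add_mem (V.smul_mem _ heV) (V.smul_mem _ hfV), ?_⟩,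
      (hkey α β r h h0 h1 h2).symm⟩
    have := hnorm α β
    rw [h] at this
    nlinarith [norm_nonneg (α • e + β • f)]

theorem elliptic_of_dim_le {T : Fin 3 → (E →ₗ[ℂ] E)} (hT : ∀ i, (T i).IsSymmetric)
    {V : Submodule ℂ E} (hV : Module.finrank ℂ V ≤ 2)
    (hd : convDim (convexHull ℝ (vstSet T V)) = 2) :
    IsEllipticDisk (convexHull ℝ (vstSet T V)) := by
  rcases hV.eq_or_lt with h2 | h1
  · obtain ⟨L, m, h⟩ := bloch hT h2
    let φ : EuclideanSpace ℝ (Fin 3) →ᵃ[ℝ] (Fin 3 → ℝ) := AffineMap.const ℝ _ m + L.toAffineMap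
    have e : convexHull ℝ (vstSet T V) = (fun r => m + L r) '' Metric.closedBall 0 1 := by
      rw [h, ← convexHull_sphere_eq_closedBall _ zero_le_one]
      exact (φ.image_convexHull _).symm
    rw [e] at hd ⊢
    rw [convDim_ball] at hd
    exact disk_of_ball L m hd
  · exfalso
    have h1' : Module.finrank ℂ V ≤ 1 := by omega
    obtain ⟨v, hv⟩ := finrank_le_one_iff.1 h1'
    have hS : (vstSet T V).Subsingleton := by
      rintro _ ⟨a, ⟨ha, han⟩, rfl⟩ _ ⟨b, ⟨hb, hbn⟩, rfl⟩
      obtain ⟨c, hc⟩ := hv ⟨a, ha⟩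
      obtain ⟨d, hd⟩ := hv ⟨b, hb⟩
      have hc' : c • (v : E) = a := congrArg Subtype.val hc
      have hd' : d • (v : E) = b := congrArg Subtype.val hd
      rw [← hc', norm_smul] at han
      rw [← hd', norm_smul] at hbn
      have hcd : ‖c‖ = ‖d‖ := by
        have hv0 : ‖(v : E)‖ ≠ 0 := by rintro h0; simp [h0] at han
        exact mul_right_cancel₀ hv0 (han.trans hbn.symm)
      rw [← hc', ← hd', vst_smul, vst_smul, hcd]
    rcases hS.eq_empty_or_singleton with h | ⟨x, h⟩
    · rw [h, convexHull_empty] at hd; unfold convDim at hd; rw [direction_affineSpan, vectorSpan_empty, finrank_bot] at hd; omega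
    · rw [h, convexHull_singleton] at hd; unfold convDim at hd; rw [direction_affineSpan, vectorSpan_singleton, finrank_bot] at hd; omega

end vec

section vec

variable {E : Type*} [NormedAddCommGroup E] [InnerProductSpace ℂ E] [FiniteDimensional ℂ E]

theorem vst_continuous (T : Fin 3 → (E →ₗ[ℂ] E)) : Continuous (vst T) := by
  apply continuous_pi
  intro i
  have : Continuous (T i) := (T i).continuous_of_finiteDimensional
  exact Complex.continuous_re.comp (continuous_id.inner this)

theorem dotR_continuous (u : Fin 3 → ℝ) : Continuous (dotR u) := by
  unfold dotR
  fun_prop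

theorem corner_final {T : Fin 3 → (E →ₗ[ℂ] E)} (hT : ∀ i, (T i).IsSymmetric) {p a b : Fin 3 → ℝ}
    (hb : ∀ y ∈ vstSet T ⊤, 0 ≤ dotR b (y - p))
    (hab : ∀ y ∈ vstSet T ⊤, dotR b (y - p) = 0 →
      0 ≤ dotR a (y - p) ∧ (dotR a (y - p) = 0 → y = p))
    (heig : ∀ v : E, ‖v‖ = 1 → vst T v = p → ∀ i, T i v - (p i : ℂ) • v = 0) :
    Submodule.span ℝ (normalConeAt (convexHull ℝ (vstSet T ⊤)) p) = ⊤ := by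
  let K : Submodule ℂ E := ⨅ i, LinearMap.ker (T i - (p i : ℂ) • LinearMap.id)
  have hKmem : ∀ v, v ∈ K ↔ ∀ i, T i v - (p i : ℂ) • v = 0 := by
    intro v; simp [K, Submodule.mem_iInf]
  have hX : IsCompact {v : E | v ∈ Kᗮ ∧ ‖v‖ = 1} := by
    have : ProperSpace E := FiniteDimensional.proper ℂ E
    have h := (isCompact_sphere (0:E) 1).inter_left (Submodule.closed_of_finiteDimensional Kᗮ)
    convert h using 1
    ext v
    simp
  have htrans : ∀ h : Fin 3 → ℝ, (∀ v ∈ {v : E | v ∈ Kᗮ ∧ ‖v‖ = 1}, 0 < dotR h (vst T v - p)) →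
      h ∈ normalConeAt (convexHull ℝ (vstSet T ⊤)) p := by
    intro h hh y hy
    rw [dotR_comm]
    refine hull_nonneg ?_ hy
    rintro _ ⟨v, ⟨-, hv⟩, rfl⟩
    obtain ⟨k, hk, w, hw, rfl⟩ := K.exists_add_mem_mem_orthogonal v
    have h1 := pencil_form T p h (k + w)
    rw [hv, one_pow, one_smul] at h1
    rw [← h1]
    have hPk : pencil T p h k = 0 := by
      simp only [pencil, LinearMap.sum_apply, LinearMap.smul_apply, LinearMap.sub_apply,
        LinearMap.id_apply]
      refine Finset.sum_eq_zero fun i _ => ?_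
      rw [(hKmem k).1 hk i, smul_zero]
    rw [map_add, hPk, zero_add, inner_add_left, ← pencil_symm hT p h k w, hPk, inner_zero_left,
      zero_add]
    refine pencil_nonneg (V := Kᗮ) ?_ hw
    rintro _ ⟨v, hv, rfl⟩
    exact (hh v hv).le
  have hcont : ∀ u : Fin 3 → ℝ, Continuous fun v => dotR u (vst T v - p) := fun u =>
    (dotR_continuous u).comp ((vst_continuous T).sub continuous_const)
  obtain ⟨M, hM0, hM⟩ := penalty hX (hcont a) (hcont b)
    (fun v hv => hb _ ⟨v, ⟨trivial, hv.2⟩, rfl⟩) (by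
      rintro v ⟨hv, hvn⟩ h0
      obtain ⟨h1, h2⟩ := hab _ ⟨v, ⟨trivial, hvn⟩, rfl⟩ h0
      refine lt_of_le_of_ne h1 fun h3 => ?_
      have hvK : v ∈ K := (hKmem v).2 (heig v hvn (h2 h3.symm))
      have := K.inner_right_of_mem_orthogonal hvK hv
      rw [inner_self_eq_zero] at this
      rw [this, norm_zero] at hvn
      exact zero_ne_one hvn)
  let f := a + M • b
  have hf : ∀ v ∈ {v : E | v ∈ Kᗮ ∧ ‖v‖ = 1}, 0 < dotR f (vst T v - p) := by
    intro v hv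
    rw [dotR_add_left, dotR_smul_left]
    exact hM v hv
  have hfN := htrans f hf
  have hsingle : ∀ i : Fin 3, Pi.single i (1:ℝ) ∈
      Submodule.span ℝ (normalConeAt (convexHull ℝ (vstSet T ⊤)) p) := by
    intro i
    obtain ⟨N, hN0, hN⟩ := penalty hX (hcont (Pi.single i 1)) (hcont f)
      (fun v hv => (hf v hv).le) (fun v hv h0 => absurd h0 (hf v hv).ne')
    have h1 : Pi.single i 1 + N • f ∈ normalConeAt (convexHull ℝ (vstSet T ⊤)) p := by
      apply htrans
      intro v hv
      rw [dotR_add_left, dotR_smul_left]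
      exact hN v hv
    have := Submodule.sub_mem _ (Submodule.subset_span h1)
      (Submodule.smul_mem _ N (Submodule.subset_span hfN))
    simpa using this
  rw [eq_top_iff]
  intro w _
  rw [pi_eq_sum_univ' w]
  refine Submodule.sum_mem _ fun i _ => Submodule.smul_mem _ _ ?_
  convert hsingle i using 1

/-- everything extracted from one non-elliptic face -/
theorem side {T : Fin 3 → (E →ₗ[ℂ] E)} (hT : ∀ i, (T i).IsSymmetric)
    (hE : Module.finrank ℂ E = 4)
    {p u : Fin 3 → ℝ} {H F G : Set (Fin 3 → ℝ)}
    (hW : convDim (convexHull ℝ (vstSet T ⊤)) = 3)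
    (hH : IsNonEllipticFace (convexHull ℝ (vstSet T ⊤)) H)
    (hu : ∀ y ∈ convexHull ℝ (vstSet T ⊤), 0 ≤ dotR u (y - p))
    (hu' : ∀ y ∈ convexHull ℝ (vstSet T ⊤), dotR u (y - p) = 0 ↔ y ∈ H)
    (hF : IsFaceOf (convexHull ℝ (vstSet T ⊤)) F) (hG : IsFaceOf (convexHull ℝ (vstSet T ⊤)) G)
    (hFd : convDim F = 1) (hGd : convDim G = 1) (hFG : F ≠ G) (hFH : F ⊆ H) (hGH : G ⊆ H)
    (hpF : p ∈ F) (hpG : p ∈ G) :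
    H = convexHull ℝ (vstSet T (LinearMap.ker (pencil T p u))) ∧
    Module.finrank ℂ (LinearMap.ker (pencil T p u)) = 3 ∧
    (∀ x : E, ‖x‖ = 1 → vst T x = p → ∀ v ∈ LinearMap.ker (pencil T p u), ∀ i,
      inner ℂ v (T i x - (p i : ℂ) • x) = 0) ∧
    ∃ a : Fin 3 → ℝ, ∀ y ∈ H, 0 ≤ dotR a (y - p) ∧ (dotR a (y - p) = 0 → y = p) := by
  obtain ⟨hHf, hHd, hHe⟩ := hH
  have hHW := hHf.2.subset
  have hHeq := face_eq_hull hT hHW hu hu'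
  have hFHf : IsFaceOf H F := ⟨hF.1, hF.2.mono hHW hFH⟩
  have hGHf : IsFaceOf H G := ⟨hG.1, hG.2.mono hHW hGH⟩
  obtain ⟨f, hf, hf'⟩ := exists_support hHf.1 hFHf (by omega) hpF
  obtain ⟨g, hg, hg'⟩ := exists_support hHf.1 hGHf (by omega) hpG
  have hu0 : u ≠ 0 := by
    rintro rfl
    have : convexHull ℝ (vstSet T ⊤) ⊆ H := fun y hy => (hu' y hy).1 (by simp [dotR])
    have := convDim_mono this
    omega
  refine ⟨hHeq, ?_, ?_, f + g, ?_⟩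
  · have hle : Module.finrank ℂ (LinearMap.ker (pencil T p u)) ≤ 4 := hE ▸ Submodule.finrank_le _
    have h4 : Module.finrank ℂ (LinearMap.ker (pencil T p u)) ≠ 4 := by
      intro h4
      have htop : LinearMap.ker (pencil T p u) = ⊤ := Submodule.eq_top_of_finrank_eq (h4.trans hE.symm)
      rw [htop] at hHeq
      rw [hHeq] at hHd
      omega
    have h2 : ¬ Module.finrank ℂ (LinearMap.ker (pencil T p u)) ≤ 2 := by
      intro h2
      have := elliptic_of_dim_le hT h2 (by rw [← hHeq]; exact hHd)
      rw [← hHeq] at this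
      exact hHe this
    omega
  · intro x hxn hxp v hv i
    have hVH : ∀ y ∈ vstSet T (LinearMap.ker (pencil T p u)), y ∈ H := by
      intro y hy
      rw [hHeq]
      exact subset_convexHull ℝ _ hy
    have hxV : x ∈ LinearMap.ker (pencil T p u) := by
      have := polarize (pencil_symm hT p u) (V := ⊤)
        (fun v hv => pencil_nonneg (fun y hy => hu y (subset_convexHull ℝ _ hy)) hv)
        (x := x) trivial (by rw [pencil_form, hxn, hxp]; simp [dotR])
        (v := pencil T p u x) trivial
      simpa using this
    have hind : LinearIndependent ℝ ![u, f, g] := by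
      rw [Fintype.linearIndependent_iff]
      intro c hc
      rw [Fin.sum_univ_three] at hc
      simp only [Matrix.cons_val_zero, Matrix.cons_val_one, Matrix.cons_val] at hc
      have h12 : c 1 = 0 ∧ c 2 = 0 := by
        refine support_indep (p := p) hFH hGH ?_ ?_ hFG hf' hg' ?_
        · rintro rfl; omega
        · rintro rfl; omega
        · intro y hy
          have h0 := (hu' y (hHW hy)).2 hy
          have h1 : dotR (c 0 • u + c 1 • f + c 2 • g) (y - p) = 0 := by rw [hc]; simp [dotR]
          rw [dotR_add_left, dotR_add_left, dotR_smul_left, dotR_smul_left, dotR_smul_left, h0] at h1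
          linarith
      have h0 : c 0 = 0 := by
        rw [h12.1, h12.2] at hc
        simpa [hu0] using hc
      intro j
      fin_cases j
      · exact h0
      · exact h12.1
      · exact h12.2
    refine corner_eigen hT hind ?_ hxV hxn hxp hv i
    intro j y hy
    have hyH := hVH y hy
    fin_cases j
    · exact hu y (hHW hyH)
    · exact hf y hyH
    · exact hg y hyH
  · intro y hy
    have h1 := hf y hy
    have h2 := hg y hy
    rw [dotR_add_left]
    refine ⟨by positivity, fun h0 => ?_⟩
    have h3 : dotR f (y - p) = 0 := by linarith
    have h4 : dotR g (y - p) = 0 := by linarith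
    exact face_inter hF hG hFd hGd hFG hpF hpG ((hf' y hy).1 h3) ((hg' y hy).1 h4)

theorem abs_main {T : Fin 3 → (E →ₗ[ℂ] E)} (hT : ∀ i, (T i).IsSymmetric)
    (hE : Module.finrank ℂ E = 4) (W : Set (Fin 3 → ℝ)) (hWdef : W = convexHull ℝ (vstSet T ⊤))
    (hdim : convDim W = 3)
    (G₁ G₂ G H₁ H₂ : Set (Fin 3 → ℝ))
    (hG₁ : IsFaceOf W G₁) (hd₁ : convDim G₁ = 1)
    (hG₁ne : ¬ IsExposedFace W G₁)
    (hG₂ : IsFaceOf W G₂) (hd₂ : convDim G₂ = 1)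
    (hG₂ne : ¬ IsExposedFace W G₂)
    (hGG : G₁ ≠ G₂)
    (hH₁ : IsNonEllipticFace W H₁)
    (hH₂ : IsNonEllipticFace W H₂)
    (hHH : H₁ ≠ H₂) (hGH₁ : G₁ ⊆ H₁) (hGH₂ : G₂ ⊆ H₂)
    (hG : IsExposedFace W G) (hGd : convDim G = 1)
    (hne : (G₁ ∩ G₂ ∩ G).Nonempty) :
    ∃ p, G₁ ∩ G₂ ∩ G = {p} ∧ IsCornerPoint W p := by
  obtain ⟨p, ⟨hp1, hp2⟩, hpG⟩ := hne
  have hWc : Convex ℝ W := hWdef ▸ convex_convexHull ℝ _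
  have hGf := face_of_exposed hWc hG
  have hpW : p ∈ W := hG₁.2.subset hp1
  refine ⟨p, ?_, hpW, ?_⟩
  · apply Set.Subset.antisymm
    · rintro m ⟨⟨hm1, hm2⟩, -⟩
      exact face_inter hG₁ hG₂ hd₁ hd₂ hGG hp1 hp2 hm1 hm2
    · rintro _ rfl
      exact ⟨⟨hp1, hp2⟩, hpG⟩
  have h1G : G₁ ≠ G := by rintro rfl; exact hG₁ne hG
  have h2G : G₂ ≠ G := by rintro rfl; exact hG₂ne hG
  have hH1d := hH₁.2.1
  have hH2d := hH₂.2.1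
  obtain ⟨u₁, hu₁, hu₁'⟩ := exists_support hWc hH₁.1 (by omega) (hGH₁ hp1)
  obtain ⟨u₂, hu₂, hu₂'⟩ := exists_support hWc hH₂.1 (by omega) (hGH₂ hp2)
  obtain ⟨w, hw⟩ := hG
  have hw1 : ∀ y ∈ W, 0 ≤ dotR w (y - p) := by
    intro y hy
    rw [hw] at hpG
    rw [dotR_sub_right]
    have := hpG.2 y hy
    linarith
  have hw2 : ∀ y ∈ W, dotR w (y - p) = 0 ↔ y ∈ G := by
    intro y hy
    rw [hw] at hpG ⊢
    rw [dotR_sub_right]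
    constructor
    · intro h0
      refine ⟨hy, fun z hz => ?_⟩
      have := hpG.2 z hz
      linarith
    · intro h0
      have := hpG.2 y hy
      have := h0.2 p hpW
      linarith
  by_contra hspan
  have hN : ∀ u : Fin 3 → ℝ, (∀ y ∈ W, 0 ≤ dotR u (y - p)) →
      u ∈ Submodule.span ℝ (normalConeAt W p) := by
    intro u hu
    apply Submodule.subset_span
    intro y hy
    rw [dotR_comm]
    exact hu y hy
  have hind : LinearIndependent ℝ ![u₁, u₂] := by
    rw [LinearIndependent.pair_iff]
    intro s t hst
    refine support_indep (p := p) hH₁.1.2.subset hH₂.1.2.subset ?_ ?_ hHH hu₁' hu₂' ?_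
    · rintro h; rw [h] at hH1d; omega
    · rintro h; rw [h] at hH2d; omega
    · intro y _
      rw [← dotR_smul_left, ← dotR_smul_left, ← dotR_add_left, hst]
      simp [dotR]
  have hlt := Submodule.finrank_lt hspan
  have hle : Submodule.span ℝ (Set.range ![u₁, u₂]) ≤ Submodule.span ℝ (normalConeAt W p) := by
    rw [Submodule.span_le]
    rintro _ ⟨j, rfl⟩
    fin_cases j
    · exact hN u₁ hu₁
    · exact hN u₂ hu₂
  have hspan2 : Submodule.span ℝ (Set.range ![u₁, u₂]) = Submodule.span ℝ (normalConeAt W p) := by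
    apply Submodule.eq_of_le_of_finrank_le hle
    rw [finrank_span_eq_card hind]
    simp at hlt ⊢
    omega
  have hwmem : w ∈ Submodule.span ℝ (Set.range ![u₁, u₂]) := hspan2 ▸ hN w hw1
  rw [Matrix.range_cons, Matrix.range_cons, Matrix.range_empty, Set.union_empty,
    Set.singleton_union, Submodule.mem_span_pair] at hwmem
  obtain ⟨a, b, hab⟩ := hwmem
  obtain ⟨hGH1, hGH2⟩ := third_support (a := a) (b := b) hGf.2.subset hH₁.1.2.subset
    hH₂.1.2.subset hdim hH1d hH2d hGd hu₁ hu₁' hu₂ hu₂' hw1 hw2 (by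
      intro y _
      rw [← hab, dotR_add_left, dotR_smul_left, dotR_smul_left])
  subst hWdef
  obtain ⟨e1, f1, k1, a1, ha1⟩ := side hT hE hdim hH₁ hu₁ hu₁' hG₁ hGf hd₁ hGd h1G hGH₁ hGH1 hp1 hpG
  obtain ⟨e2, f2, k2, -⟩ := side hT hE hdim hH₂ hu₂ hu₂' hG₂ hGf hd₂ hGd h2G hGH₂ hGH2 hp2 hpG
  apply hspan
  have hsup : LinearMap.ker (pencil T p u₁) ⊔ LinearMap.ker (pencil T p u₂) = ⊤ := by
    apply Submodule.eq_top_of_finrank_eq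
    have hlt : LinearMap.ker (pencil T p u₁) <
        LinearMap.ker (pencil T p u₁) ⊔ LinearMap.ker (pencil T p u₂) := by
      refine lt_of_le_of_ne le_sup_left fun h => ?_
      have hle : LinearMap.ker (pencil T p u₂) ≤ LinearMap.ker (pencil T p u₁) := by
        rw [h]; exact le_sup_right
      have := Submodule.eq_of_le_of_finrank_eq hle (f2.trans f1.symm)
      apply hHH
      rw [e1, e2, this]
    have h1 := Submodule.finrank_lt_finrank_of_lt hlt
    have h2 := Submodule.finrank_le
      (LinearMap.ker (pencil T p u₁) ⊔ LinearMap.ker (pencil T p u₂))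
    omega
  refine corner_final hT (a := a1) (b := u₁) (fun y hy => hu₁ y (subset_convexHull ℝ _ hy)) ?_ ?_
  · intro y hy h0
    exact ha1 y ((hu₁' y (subset_convexHull ℝ _ hy)).1 h0)
  · intro x hxn hxp i
    rw [← inner_self_eq_zero (𝕜 := ℂ)]
    have hmem : T i x - (p i : ℂ) • x ∈
        LinearMap.ker (pencil T p u₁) ⊔ LinearMap.ker (pencil T p u₂) := hsup ▸ Submodule.mem_top
    obtain ⟨v1, hv1, v2, hv2, hv⟩ := Submodule.mem_sup.1 hmem
    nth_rewrite 1 [← hv]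
    rw [inner_add_left, k1 x hxn hxp v1 hv1 i, k2 x hxn hxp v2 hv2 i, add_zero]

end vec

theorem vst_mat (A : Fin 3 → Matrix (Fin 4) (Fin 4) ℂ) (v : EuclideanSpace ℂ (Fin 4)) :
    wpt A (vecMulVec v (star v : Fin 4 → ℂ)) = vst (fun i => Matrix.toEuclideanLin (A i)) v := by
  ext i
  simp only [wpt, vst]
  rw [EuclideanSpace.inner_eq_star_dotProduct, Matrix.vecMulVec_mul, Matrix.trace_vecMulVec]
  congr 1
  simp only [Matrix.toLpLin_apply]
  rw [dotProduct_comm, ← Matrix.dotProduct_mulVec, dotProduct_comm]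

theorem jnr_eq_hull (A : Fin 3 → Matrix (Fin 4) (Fin 4) ℂ) :
    JNR A = convexHull ℝ (vstSet (fun i => Matrix.toEuclideanLin (A i)) ⊤) := by
  apply Set.Subset.antisymm
  · rintro _ ⟨ρ, ⟨hρ, htr⟩, rfl⟩
    have hh := hρ.isHermitian
    have key : wpt A ρ = ∑ k, hh.eigenvalues k • vst (fun i => Matrix.toEuclideanLin (A i)) (hh.eigenvectorBasis k) := by
      have hdec : ρ = ∑ k, (hh.eigenvalues k : ℂ) • vecMulVec (hh.eigenvectorBasis k) (star (hh.eigenvectorBasis k) : Fin 4 → ℂ) := by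
        conv_lhs => rw [hh.spectral_theorem]
        ext i j
        rw [Unitary.conjStarAlgAut_apply, Matrix.mul_apply, Matrix.sum_apply]
        refine Finset.sum_congr rfl fun k _ => ?_
        rw [Matrix.mul_diagonal]
        simp [Matrix.vecMulVec_apply, Matrix.star_apply, Matrix.IsHermitian.eigenvectorUnitary_apply]
        ring
      ext i
      conv_lhs => rw [hdec]
      simp only [← vst_mat]
      simp only [wpt, Finset.sum_mul, Matrix.trace_sum, Complex.re_sum, Finset.sum_apply,
        Pi.smul_apply, smul_eq_mul, Matrix.smul_mul, Matrix.trace_smul, Complex.re_ofReal_mul]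
    rw [key]
    refine (convex_convexHull ℝ _).sum_mem (fun k _ => hρ.eigenvalues_nonneg k) ?_ ?_
    · have := hh.trace_eq_sum_eigenvalues
      rw [htr] at this
      have h2 : ((∑ k, hh.eigenvalues k : ℝ) : ℂ) = 1 := by rw [this]; push_cast; rfl
      exact_mod_cast h2
    · intro k _
      exact subset_convexHull ℝ _ ⟨_, ⟨trivial, hh.eigenvectorBasis.norm_eq_one k⟩, rfl⟩
  · apply convexHull_min
    · rintro _ ⟨v, ⟨-, hv⟩, rfl⟩
      refine ⟨vecMulVec v (star v : Fin 4 → ℂ), ⟨Matrix.posSemidef_vecMulVec_self_star _, ?_⟩, vst_mat A v⟩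
      rw [Matrix.trace_vecMulVec, ← EuclideanSpace.inner_eq_star_dotProduct,
        inner_self_eq_norm_sq_to_K, hv]
      simp
    · rintro _ ⟨ρ, ⟨hρ, ht⟩, rfl⟩ _ ⟨σ, ⟨hσ, ht'⟩, rfl⟩ a b ha hb hab
      refine ⟨(a : ℂ) • ρ + (b : ℂ) • σ, ⟨?_, ?_⟩, ?_⟩
      · exact (hρ.smul (by exact_mod_cast ha)).add (hσ.smul (by exact_mod_cast hb))
      · rw [Matrix.trace_add, Matrix.trace_smul, Matrix.trace_smul, ht, ht']
        simp only [smul_eq_mul, mul_one]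
        exact_mod_cast hab
      · ext i
        simp [wpt, Matrix.add_mul, Matrix.trace_add]

/-- if two distinct one-dimensional nonexposed faces, included in
distinct non-elliptic faces, and a one-dimensional exposed face have a common
point, then that point is a corner point of `W`. -/
theorem stmt8 (A : Fin 3 → Matrix (Fin 4) (Fin 4) ℂ)
    (hA : ∀ i, (A i).IsHermitian)
    (hdim : convDim (JNR A) = 3)
    (G₁ G₂ G H₁ H₂ : Set (Fin 3 → ℝ))
    (hG₁ : IsFaceOf (JNR A) G₁) (hd₁ : convDim G₁ = 1)
    (hG₁ne : ¬ IsExposedFace (JNR A) G₁)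
    (hG₂ : IsFaceOf (JNR A) G₂) (hd₂ : convDim G₂ = 1)
    (hG₂ne : ¬ IsExposedFace (JNR A) G₂)
    (hGG : G₁ ≠ G₂)
    (hH₁ : IsNonEllipticFace (JNR A) H₁)
    (hH₂ : IsNonEllipticFace (JNR A) H₂)
    (hHH : H₁ ≠ H₂) (hGH₁ : G₁ ⊆ H₁) (hGH₂ : G₂ ⊆ H₂)
    (hG : IsExposedFace (JNR A) G) (hGd : convDim G = 1)
    (hne : (G₁ ∩ G₂ ∩ G).Nonempty) :
    ∃ p, G₁ ∩ G₂ ∩ G = {p} ∧ IsCornerPoint (JNR A) p := by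
  exact abs_main (fun i => Matrix.isSymmetric_toEuclideanLin_iff.2 (hA i)) finrank_euclideanSpace_fin
    (JNR A) (jnr_eq_hull A) hdim G₁ G₂ G H₁ H₂ hG₁ hd₁ hG₁ne hG₂ hd₂ hG₂ne hGG hH₁ hH₂ hHH hGH₁ hGH₂
    hG hGd hne
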